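/- arXiv:1703.05277 — 8 statements merged into one kernel-verified Lean document; each statement's English description precedes it below -/
import Mathlib

section
/- Let u : ℝ × ℝ → ℂ (arguments (t,x)) be twice continuously differentiable. For λ ∈ ℂ define the matrices U(t,x;λ) := −iλ²σ₃ + λQ(u(t,x)) and V(t,x;λ) := −2iλ⁴σ₃ + 2λ³Q(u(t,x)) + iλ²|u(t,x)|²σ₃ − λ|u(t,x)|²Q(u(t,x)) + iλσ₃Q(∂ₓu(t,x)). Then the zero-curvature equation ∂ₜU − ∂ₓV + UV − VU = 0 holds at every (t,x) ∈ ℝ² and for every λ ∈ ℂ if and only if u is a classical solution of the derivative nonlinear Schrödinger equation i∂ₜu + ∂ₓ²u + i∂ₓ(|u|²u) = 0 on ℝ². -/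
/-!
Since `σ₃Q = -Qσ₃` and `Q² = -|u|²`, expanding `∂ₜU - ∂ₓV + [U, V]` in powers of `λ` makes every
coefficient cancel except that of `λ`, which is `Q_t + (|u|²Q)_x - iσ₃Q_xx`. With
`E = iu_t + u_xx + i(|u|²u)_x`, the upper right entry of this is `-iE` and the lower left entry is
`-i conj E` (`curvature_eq`), so the curvature vanishes for all `λ` (equivalently, for `λ = 1`)
exactly when `E = 0`. The `C²` hypothesis enters through the existence of `u_t`, `u_x` and `u_xx`.
-/

open Complex

/-- The Pauli matrix `σ₃`. -/
def sigma3 : Matrix (Fin 2) (Fin 2) ℂ := !![1, 0; 0, -1]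

/-- The potential matrix `Q(u) = [[0,u],[−conj(u),0]]`. -/
def Qmat (u : ℂ) : Matrix (Fin 2) (Fin 2) ℂ := !![0, u; -(starRingEnd ℂ u), 0]

/-- Partial derivative in the first (time) variable of a scalar function on `ℝ × ℝ`. -/
noncomputable def pt (f : ℝ × ℝ → ℂ) (p : ℝ × ℝ) : ℂ := deriv (fun s => f (s, p.2)) p.1

/-- Partial derivative in the second (space) variable of a scalar function on `ℝ × ℝ`. -/
noncomputable def px (f : ℝ × ℝ → ℂ) (p : ℝ × ℝ) : ℂ := deriv (fun y => f (p.1, y)) p.2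

/-- Entrywise partial derivative in time of a matrix-valued function on `ℝ × ℝ`. -/
noncomputable def ptM (f : ℝ × ℝ → Matrix (Fin 2) (Fin 2) ℂ) (p : ℝ × ℝ) :
    Matrix (Fin 2) (Fin 2) ℂ :=
  Matrix.of fun i j => deriv (fun s => f (s, p.2) i j) p.1

/-- Entrywise partial derivative in space of a matrix-valued function on `ℝ × ℝ`. -/
noncomputable def pxM (f : ℝ × ℝ → Matrix (Fin 2) (Fin 2) ℂ) (p : ℝ × ℝ) :
    Matrix (Fin 2) (Fin 2) ℂ :=
  Matrix.of fun i j => deriv (fun y => f (p.1, y) i j) p.2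

/-- The matrix `U(t,x;λ) := −iλ²σ₃ + λQ(u(t,x))` of the Kaup–Newell spectral problem. -/
noncomputable def Umat (u : ℝ × ℝ → ℂ) (l : ℂ) (p : ℝ × ℝ) : Matrix (Fin 2) (Fin 2) ℂ :=
  (-Complex.I * l ^ 2) • sigma3 + l • Qmat (u p)

/-- The matrix `V(t,x;λ)` of the time-evolution problem. -/
noncomputable def Vmat (u : ℝ × ℝ → ℂ) (l : ℂ) (p : ℝ × ℝ) : Matrix (Fin 2) (Fin 2) ℂ :=
  (-2 * Complex.I * l ^ 4) • sigma3 + (2 * l ^ 3) • Qmat (u p) +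
    (Complex.I * l ^ 2 * (‖u p‖ : ℂ) ^ 2) • sigma3 - (l * (‖u p‖ : ℂ) ^ 2) • Qmat (u p) +
    (Complex.I * l) • (sigma3 * Qmat (px u p))

theorem hasDerivAt_pt {f : ℝ × ℝ → ℂ} (hf : Differentiable ℝ f) (p : ℝ × ℝ) :
    HasDerivAt (fun s => f (s, p.2)) (pt f p) p.1 :=
  DifferentiableAt.hasDerivAt (by fun_prop)

theorem hasDerivAt_px {f : ℝ × ℝ → ℂ} (hf : Differentiable ℝ f) (p : ℝ × ℝ) :
    HasDerivAt (fun y => f (p.1, y)) (px f p) p.2 :=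
  DifferentiableAt.hasDerivAt (by fun_prop)

theorem differentiable_px {u : ℝ × ℝ → ℂ} (hu : ContDiff ℝ 2 u) : Differentiable ℝ (px u) := by
  have hd : Differentiable ℝ u := hu.differentiable (by norm_num)
  have h : px u = fun q => fderiv ℝ u q (0, 1) := by
    funext q
    have h1 : HasDerivAt (fun y : ℝ => (q.1, y)) ((0 : ℝ), (1 : ℝ)) q.2 :=
      (hasDerivAt_const q.2 q.1).prodMk (hasDerivAt_id q.2)
    exact ((hd q).hasFDerivAt.comp_hasDerivAt q.2 h1).deriv
  have h2 : Differentiable ℝ (fderiv ℝ u) :=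
    (hu.fderiv_right (m := 1) (by norm_num)).differentiable (by norm_num)
  rw [h]
  fun_prop

theorem norm_sq_eq (z : ℂ) : (‖z‖ : ℂ) ^ 2 = z * (starRingEnd ℂ) z := (Complex.mul_conj' z).symm

theorem hasDerivAt_conj {f : ℝ → ℂ} {f' : ℂ} {x : ℝ} (h : HasDerivAt f f' x) :
    HasDerivAt (fun y => (starRingEnd ℂ) (f y)) ((starRingEnd ℂ) f') x := h.star

/-- The left-hand side of the DNLS equation. -/
noncomputable def dnls (u : ℝ × ℝ → ℂ) (p : ℝ × ℝ) : ℂ :=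
  Complex.I * pt u p + px (px u) p + Complex.I * px (fun q => (‖u q‖ : ℂ) ^ 2 * u q) p

/-- The curvature is off-diagonal and linear in `λ`, with entries given by the DNLS expression and
its conjugate. -/
theorem curvature_eq {u : ℝ × ℝ → ℂ} (hu : ContDiff ℝ 2 u) (p : ℝ × ℝ) (l : ℂ) :
    ptM (Umat u l) p - pxM (Vmat u l) p + Umat u l p * Vmat u l p - Vmat u l p * Umat u l p =
      !![0, -Complex.I * l * dnls u p; -Complex.I * l * (starRingEnd ℂ) (dnls u p), 0] := by
  have hd : Differentiable ℝ u := hu.differentiable (by norm_num)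
  have ht := hasDerivAt_pt hd p
  have hx := hasDerivAt_px hd p
  have hxx := hasDerivAt_px (differentiable_px hu) p
  have htc := hasDerivAt_conj ht
  have hxc := hasDerivAt_conj hx
  have hxxc := hasDerivAt_conj hxx
  have hU : ptM (Umat u l) p =
      !![0, l * pt u p; -(l * (starRingEnd ℂ) (pt u p)), 0] := by
    ext i j
    fin_cases i <;> fin_cases j <;> simp [ptM, Umat, sigma3, Qmat, -deriv_const_mul_field',
      -mul_eq_mul_left_iff]
    · exact (ht.const_mul l).deriv
    · exact (htc.const_mul l).deriv
  set a := u p with ha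
  set b := px u p with hb
  set c := px (px u) p with hc
  have hn : HasDerivAt (fun y => u (p.1, y) * (starRingEnd ℂ) (u (p.1, y)))
      (b * (starRingEnd ℂ) a + a * (starRingEnd ℂ) b) p.2 := hx.mul hxc
  have hN : px (fun q => (‖u q‖ : ℂ) ^ 2 * u q) p =
      (b * (starRingEnd ℂ) a + a * (starRingEnd ℂ) b) * a + a * (starRingEnd ℂ) a * b := by
    simp only [px, norm_sq_eq]
    exact (hn.mul hx).deriv
  have hV : pxM (Vmat u l) p =
      !![Complex.I * l ^ 2 * (b * (starRingEnd ℂ) a + a * (starRingEnd ℂ) b),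
        2 * l ^ 3 * b - l * ((b * (starRingEnd ℂ) a + a * (starRingEnd ℂ) b) * a
          + a * (starRingEnd ℂ) a * b) + Complex.I * l * c;
        -(2 * l ^ 3 * (starRingEnd ℂ) b) + l * ((b * (starRingEnd ℂ) a + a * (starRingEnd ℂ) b)
          * (starRingEnd ℂ) a + a * (starRingEnd ℂ) a * (starRingEnd ℂ) b)
          + Complex.I * l * (starRingEnd ℂ) c,
        -(Complex.I * l ^ 2 * (b * (starRingEnd ℂ) a + a * (starRingEnd ℂ) b))] := by
    ext i j
    fin_cases i <;> fin_cases j <;>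
      simp [pxM, Vmat, sigma3, Qmat, norm_sq_eq, -mul_eq_mul_left_iff, -deriv_const_mul_field']
    · exact (hn.const_mul (Complex.I * l ^ 2)).deriv
    · refine HasDerivAt.deriv ?_
      convert (((hx.const_mul (2 * l ^ 3)).sub ((hn.const_mul l).mul hx)).add
        (hxx.const_mul (Complex.I * l))) using 1
      · funext y
        simp only [Pi.mul_apply, Pi.add_apply, Pi.sub_apply]
      · simp only [Prod.mk.eta, ← ha]
        ring
    · refine HasDerivAt.deriv ?_
      convert ((((hxc.const_mul (2 * l ^ 3)).neg).add ((hn.const_mul l).mul hxc)).add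
        (hxxc.const_mul (Complex.I * l))) using 1
      · funext y
        simp only [Pi.mul_apply, Pi.add_apply, Pi.neg_apply]
      · simp only [Prod.mk.eta, ← ha]
        ring
    · exact (hn.const_mul (Complex.I * l ^ 2)).deriv
  rw [hU, hV, dnls, hN]
  have hI := Complex.I_sq
  simp only [← hc]
  ext i j
  fin_cases i <;> fin_cases j <;>
    simp [Umat, Vmat, sigma3, Qmat, norm_sq_eq, ← ha, ← hb] <;>
    grind

theorem zero_curvature_iff_dnls (u : ℝ × ℝ → ℂ) (hu : ContDiff ℝ 2 u) :
    (∀ p : ℝ × ℝ, ∀ l : ℂ,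
        ptM (Umat u l) p - pxM (Vmat u l) p +
          Umat u l p * Vmat u l p - Vmat u l p * Umat u l p = 0) ↔
      (∀ p : ℝ × ℝ,
        Complex.I * pt u p + px (px u) p +
          Complex.I * px (fun q => (‖u q‖ : ℂ) ^ 2 * u q) p = 0) := by
  simp only [curvature_eq hu]
  change _ ↔ ∀ p, dnls u p = 0
  constructor
  · intro h p
    simpa using congrFun (congrFun (h p 1) 0) 1
  · intro h p l
    ext i j
    fin_cases i <;> fin_cases j <;> simp [h p]
end

section
/- Let λ ∈ ℂ and η = (η₁,η₂) ∈ ℂ² with d_λ(η,η) ≠ 0, and set η† := σ₁σ₃·conj(η) = (−conj(η₂), conj(η₁)). Then d_{conj(λ)}(η†,η†) = d_λ(η,η) (so it is nonzero), G_{conj(λ)}(η†) = G_λ(η), S_{conj(λ)}(η†) = S_λ(η), and consequently B_{conj(λ)}(η†)u = B_λ(η)u for every u ∈ ℂ. -/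
/-!
Write `η† = (−conj η₂, conj η₁)`. Everything follows from `d_{conj λ}(η†,η†) = d_λ(η,η)`
(`dForm_conj_dagger`): used at `λ` and at `conj λ` it fixes the denominator and numerator of `G`, while
the numerator of `S` picks up two signs that cancel; `B` is built from `G` and `S` alone.
-/

open Complex

/-- The bilinear form `d_λ(η,η) := λ|η₁|² + conj(λ)|η₂|²`. -/
noncomputable def dForm (l : ℂ) (η : ℂ × ℂ) : ℂ :=
  l * (‖η.1‖ : ℂ) ^ 2 + (starRingEnd ℂ l) * (‖η.2‖ : ℂ) ^ 2

/-- `G_λ(η) := d_{conj(λ)}(η,η)/d_λ(η,η)`. -/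
noncomputable def Gop (l : ℂ) (η : ℂ × ℂ) : ℂ :=
  dForm (starRingEnd ℂ l) η / dForm l η

/-- `S_λ(η) := 2i(λ² − conj(λ)²)η₁conj(η₂)/d_λ(η,η)`. -/
noncomputable def Sop (l : ℂ) (η : ℂ × ℂ) : ℂ :=
  2 * Complex.I * (l ^ 2 - (starRingEnd ℂ l) ^ 2) * η.1 * (starRingEnd ℂ η.2) / dForm l η

/-- The Bäcklund transformation `B_λ(η)u := G_λ(η)(−G_λ(η)u + S_λ(η))`. -/
noncomputable def Bop (l : ℂ) (η : ℂ × ℂ) (u : ℂ) : ℂ :=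
  Gop l η * (-(Gop l η) * u + Sop l η)

/-- The form `d` is invariant under `(λ, η) ↦ (conj λ, η†)`: the map `η ↦ η†` exchanges the moduli of
the two components, and conjugating `λ` exchanges their coefficients. -/
theorem dForm_conj_dagger (l : ℂ) (η : ℂ × ℂ) :
    dForm (starRingEnd ℂ l) (-(starRingEnd ℂ η.2), starRingEnd ℂ η.1) = dForm l η := by
  simp only [dForm, norm_neg, RCLike.norm_conj, Complex.conj_conj]
  ring

theorem backlund_symmetry (l : ℂ) (η : ℂ × ℂ) (hη : dForm l η ≠ 0) :
    dForm (starRingEnd ℂ l) (-(starRingEnd ℂ η.2), starRingEnd ℂ η.1) = dForm l η ∧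
    Gop (starRingEnd ℂ l) (-(starRingEnd ℂ η.2), starRingEnd ℂ η.1) = Gop l η ∧
    Sop (starRingEnd ℂ l) (-(starRingEnd ℂ η.2), starRingEnd ℂ η.1) = Sop l η ∧
    ∀ u : ℂ, Bop (starRingEnd ℂ l) (-(starRingEnd ℂ η.2), starRingEnd ℂ η.1) u = Bop l η u := by
  have hd := dForm_conj_dagger l η
  have hG : Gop (starRingEnd ℂ l) (-(starRingEnd ℂ η.2), starRingEnd ℂ η.1) = Gop l η := by
    -- the numerator is the invariance of `d` at the parameter `conj λ`
    unfold Gop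
    rw [hd, dForm_conj_dagger (starRingEnd ℂ l) η]
  have hS : Sop (starRingEnd ℂ l) (-(starRingEnd ℂ η.2), starRingEnd ℂ η.1) = Sop l η := by
    -- the signs from `λ² − conj(λ)²` and from the first component of `η†` cancel
    unfold Sop
    rw [hd]
    simp only [Complex.conj_conj]
    ring
  refine ⟨hd, hG, hS, fun u => ?_⟩
  unfold Bop
  rw [hG, hS]
end

section
/- Let λ₁ ∈ ℂ and let η, η* ∈ ℂ² satisfy d_{λ₁}(η,η) ≠ 0 and d_{λ₁}(η*,η*) ≠ 0. Then B_{λ₁}(η*)(B_{λ₁}(η)u) = u for every u ∈ ℂ if and only if either (conj(G_{λ₁}(η*)) = G_{λ₁}(η) and S_{λ₁}(η*) = S_{λ₁}(η)) or (conj(G_{λ₁}(η*)) = −G_{λ₁}(η) and S_{λ₁}(η*) = −S_{λ₁}(η)). -/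
/-! Write `g, s` for `G, S` at `η` and `g', s'` for those at `ηs`. Expanding the composition gives
`B(ηs)(B(η)u) = (g'g)² u + g'(s' - g'g s)`, an affine map of `u`. It is the identity iff
`(g'g)² = 1` and `s' = g'g s` (as `g' ≠ 0`), i.e. `g'g = ±1` and `s' = ±s` with the same sign.
Since `|g'| = 1` (`conj_Gop_mul_self`), `g'g = ±1` is the same as `conj g' = ±g`. -/

open Complex

theorem dForm_conj (l : ℂ) (η : ℂ × ℂ) :
    dForm (starRingEnd ℂ l) η = starRingEnd ℂ (dForm l η) := by
  simp [dForm]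

/-- `G` is unimodular, being the quotient of `conj d` by `d`. -/
theorem conj_Gop_mul_self (l : ℂ) (η : ℂ × ℂ) (h : dForm l η ≠ 0) :
    starRingEnd ℂ (Gop l η) * Gop l η = 1 := by
  have h' : starRingEnd ℂ (dForm l η) ≠ 0 := (map_ne_zero _).2 h
  rw [Gop, dForm_conj, map_div₀, Complex.conj_conj]
  field_simp

theorem backlund_left_inverse_iff (l1 : ℂ) (η ηs : ℂ × ℂ)
    (hη : dForm l1 η ≠ 0) (hηs : dForm l1 ηs ≠ 0) :
    (∀ u : ℂ, Bop l1 ηs (Bop l1 η u) = u) ↔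
      ((starRingEnd ℂ (Gop l1 ηs) = Gop l1 η ∧ Sop l1 ηs = Sop l1 η) ∨
       (starRingEnd ℂ (Gop l1 ηs) = -(Gop l1 η) ∧ Sop l1 ηs = -(Sop l1 η))) := by
  have hc := conj_Gop_mul_self l1 ηs hηs
  simp only [Bop]
  generalize starRingEnd ℂ (Gop l1 ηs) = c at *
  generalize Gop l1 ηs = g' at *
  generalize Gop l1 η = g
  generalize Sop l1 ηs = s'
  generalize Sop l1 η = s
  have hg' : g' ≠ 0 := right_ne_zero_of_mul_eq_one hc
  constructor
  · intro h
    -- The values at `u = 0` and `u = 1` determine the affine map.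
    have h0 := h 0
    have h1 := h 1
    have hs : s' = g' * g * s := by
      apply mul_left_cancel₀ hg'
      linear_combination h0
    have hsq : (g' * g) * (g' * g) = 1 := by linear_combination h1 - h0
    rcases mul_self_eq_one_iff.1 hsq with e | e
    · refine Or.inl ⟨?_, ?_⟩
      · linear_combination g * hc - c * e
      · rw [hs, e, one_mul]
    · refine Or.inr ⟨?_, ?_⟩
      · linear_combination c * e - g * hc
      · rw [hs, e, neg_one_mul]
  · rintro (⟨rfl, rfl⟩ | ⟨rfl, rfl⟩) u
    · linear_combination (u * (c * g' + 1) - g' * s') * hc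
    · have e : g * g' = -1 := by linear_combination -hc
      linear_combination (u * (g * g' - 1) - g' * s) * e
end

section
/- Let u : ℝ → ℂ be continuously differentiable with |u|² integrable on ℝ, and let λ ∈ ℂ. For x ∈ ℝ set w(x) := (1/(2i))∫_x^∞ |u(y)|² dy and define the gauge matrix T(x) := diag(e^{w(x)}, e^{−w(x)})·[[1, 0],[−conj(u(x)), 2iλ]]. If ψ : ℝ → ℂ² is a differentiable solution of the KN spectral problem at λ with potential u, then ψ̃(x) := T(x)ψ(x) satisfies the Zakharov–Shabat system ψ̃'(x) = (−iλ²σ₃ + Q̃(x))ψ̃(x) for all x ∈ ℝ, where Q̃(x) := (1/(2i))·[[0, u(x)·e^{−i∫_x^∞|u(y)|²dy}], [−(2i·(d/dx)conj(u)(x) + conj(u(x))|u(x)|²)·e^{i∫_x^∞|u(y)|²dy}, 0]]. -/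
/-!
Write `S(x) = ∫_x^∞ |u|²`, so that `w = S / (2i)`. Since `u` is continuous and `|u|²` is integrable,
`S' = -|u|²` (`hasDerivAt_tail`), hence `w' = i|u|²/2` (`hasDerivAt_wGauge`). The two components of
`T ψ` are `e^w ψ₁` and `e^{-w} (-ū ψ₁ + 2iλ ψ₂)` (`Tgauge_mulVec`). Differentiating each by the
product rule and inserting the Kaup–Newell equations, the claim becomes a polynomial identity, given
`e^w e^{-w} = 1`, `e^{-iS} = (e^w)²`, `e^{iS} = (e^{-w})²` and `|u|² = u ū`. In the second component
the term `2iλ (-w') ψ₂ = λ|u|² ψ₂` cancels `-ū λ u ψ₂`, so no off-diagonal term of order `λ`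
survives.
-/

open Complex

/-- `ψ` solves the Kaup–Newell spectral problem at `λ` with potential `u`:
`ψ'(x) = (−iλ²σ₃ + λQ(u(x)))ψ(x)`. -/
def SolvesKN (u : ℝ → ℂ) (l : ℂ) (ψ : ℝ → Fin 2 → ℂ) : Prop :=
  ∀ x : ℝ, HasDerivAt ψ (((-Complex.I * l ^ 2) • sigma3 + l • Qmat (u x)).mulVec (ψ x)) x

open MeasureTheory

/-- The phase `w(x) := (1/(2i))∫_x^∞ |u(y)|² dy`. -/
noncomputable def wGauge (u : ℝ → ℂ) (x : ℝ) : ℂ :=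
  (1 / (2 * Complex.I)) * ((∫ y in Set.Ioi x, ‖u y‖ ^ 2) : ℝ)

/-- The gauge matrix `T(x)`. -/
noncomputable def Tgauge (u : ℝ → ℂ) (l : ℂ) (x : ℝ) : Matrix (Fin 2) (Fin 2) ℂ :=
  !![Complex.exp (wGauge u x), 0; 0, Complex.exp (-(wGauge u x))] *
    !![1, 0; -(starRingEnd ℂ (u x)), 2 * Complex.I * l]

/-- The Zakharov–Shabat potential matrix `Q̃(x)`. -/
noncomputable def Qtilde (u : ℝ → ℂ) (x : ℝ) : Matrix (Fin 2) (Fin 2) ℂ :=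
  (1 / (2 * Complex.I)) •
    !![0, u x * Complex.exp (-Complex.I * ((∫ y in Set.Ioi x, ‖u y‖ ^ 2) : ℝ));
       -(2 * Complex.I * deriv (fun y => starRingEnd ℂ (u y)) x +
           starRingEnd ℂ (u x) * (‖u x‖ : ℂ) ^ 2) *
         Complex.exp (Complex.I * ((∫ y in Set.Ioi x, ‖u y‖ ^ 2) : ℝ)), 0]

/-- The tail integral is `∫_x^∞ f` minus the integral over `[x, t]`, so the fundamental theorem of
calculus applies. -/
theorem hasDerivAt_tail (f : ℝ → ℝ) (hf : Continuous f) (hint : Integrable f) (x : ℝ) :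
    HasDerivAt (fun t => ∫ y in Set.Ioi t, f y) (-f x) x := by
  have h : (fun t => ∫ y in Set.Ioi t, f y) =
      fun t => (∫ y in Set.Ioi x, f y) - ∫ y in x..t, f y := by
    funext t
    rw [← intervalIntegral.integral_Ioi_sub_Ioi' (hint.integrableOn (s := Set.Ioi x))
      (hint.integrableOn (s := Set.Ioi t))]
    ring
  rw [h]
  exact (hf.integral_hasStrictDerivAt x x).hasDerivAt.const_sub _

theorem wGauge_eq (u : ℝ → ℂ) (x : ℝ) :
    wGauge u x = -(Complex.I / 2) * ((∫ y in Set.Ioi x, ‖u y‖ ^ 2 : ℝ) : ℂ) := by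
  have h : 1 / (2 * Complex.I) = -(Complex.I / 2) := by
    rw [one_div, mul_inv, Complex.inv_I]
    ring
  rw [wGauge, h]

theorem hasDerivAt_wGauge (u : ℝ → ℂ) (hu : Continuous u)
    (hint : Integrable (fun y => ‖u y‖ ^ 2)) (x : ℝ) :
    HasDerivAt (wGauge u) (Complex.I / 2 * (u x * starRingEnd ℂ (u x))) x := by
  have h := ((hasDerivAt_tail (fun y => ‖u y‖ ^ 2) (hu.norm.pow 2) hint x).ofReal_comp).const_mul
    (-(Complex.I / 2))
  rw [show wGauge u = _ from funext (wGauge_eq u)]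
  refine h.congr_deriv ?_
  rw [Complex.mul_conj']
  push_cast
  ring

theorem Tgauge_mulVec (u : ℝ → ℂ) (l : ℂ) (x : ℝ) (v : Fin 2 → ℂ) :
    (Tgauge u l x).mulVec v =
      ![Complex.exp (wGauge u x) * v 0,
        Complex.exp (-wGauge u x) * (-(starRingEnd ℂ (u x)) * v 0 + 2 * Complex.I * l * v 1)] := by
  ext i
  fin_cases i <;> simp [Tgauge, Matrix.mulVec, dotProduct, Fin.sum_univ_two, Matrix.mul_apply]
  ring

theorem kn_to_zs_gauge (u : ℝ → ℂ) (hu : ContDiff ℝ 1 u)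
    (hint : Integrable (fun y => ‖u y‖ ^ 2)) (l : ℂ)
    (ψ : ℝ → Fin 2 → ℂ) (hψ : SolvesKN u l ψ) :
    ∀ x : ℝ, HasDerivAt (fun y => (Tgauge u l y).mulVec (ψ y))
      (((-Complex.I * l ^ 2) • sigma3 + Qtilde u x).mulVec
        ((Tgauge u l x).mulVec (ψ x))) x := by
  intro x
  have hw := hasDerivAt_wGauge u hu.continuous hint x
  have hE := hw.cexp
  have hF := hw.neg.cexp
  have hu' := (hu.differentiable one_ne_zero x).hasDerivAt
  have hc : HasDerivAt (fun y => starRingEnd ℂ (u y)) (deriv (fun y => starRingEnd ℂ (u y)) x) x :=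
    hu'.star.differentiableAt.hasDerivAt
  have hψ0 := hasDerivAt_pi.1 (hψ x) 0
  have hψ1 := hasDerivAt_pi.1 (hψ x) 1
  have hEF : Complex.exp (wGauge u x) * Complex.exp (-wGauge u x) = 1 := by
    rw [← Complex.exp_add, add_neg_cancel, Complex.exp_zero]
  have hEE : Complex.exp (-Complex.I * ((∫ y in Set.Ioi x, ‖u y‖ ^ 2 : ℝ) : ℂ)) =
      Complex.exp (wGauge u x) * Complex.exp (wGauge u x) := by
    rw [← Complex.exp_add, wGauge_eq]
    ring_nf
  have hFF : Complex.exp (Complex.I * ((∫ y in Set.Ioi x, ‖u y‖ ^ 2 : ℝ) : ℂ)) =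
      Complex.exp (-wGauge u x) * Complex.exp (-wGauge u x) := by
    rw [← Complex.exp_add, wGauge_eq]
    ring_nf
  have hI : 1 / (2 * Complex.I) = -(Complex.I / 2) := by
    rw [one_div, mul_inv, Complex.inv_I]
    ring
  have hII := Complex.I_mul_I
  simp only [Tgauge_mulVec, Qtilde, hEE, hFF, hI, ← Complex.mul_conj']
  simp only [Matrix.mulVec, dotProduct, Fin.sum_univ_two, Qmat, sigma3, Matrix.add_apply,
    Matrix.smul_apply, Matrix.of_apply, Matrix.cons_val', Matrix.cons_val_zero,
    Matrix.cons_val_one, Matrix.cons_val_fin_one, smul_eq_mul] at hψ0 hψ1 ⊢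
  -- Only `HasDerivAt` of `ū` is used, so its derivative is treated as an unknown `d`.
  generalize deriv (fun y => starRingEnd ℂ (u y)) x = d at hc ⊢
  rw [hasDerivAt_pi]
  intro i
  fin_cases i
  · have h := hE.mul hψ0
    refine h.congr_deriv ?_
    simp
    generalize Complex.exp (wGauge u x) = E at *
    generalize Complex.exp (-wGauge u x) = F at *
    linear_combination (-(starRingEnd ℂ (u x)) * ψ x 0 + 2 * Complex.I * l * ψ x 1) *
      (Complex.I / 2) * u x * E * hEF + E * l * u x * ψ x 1 * hII
  · have h := hF.mul ((hc.neg.mul hψ0).add (hψ1.const_mul (2 * Complex.I * l)))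
    refine h.congr_deriv ?_
    simp
    generalize Complex.exp (wGauge u x) = E at *
    generalize Complex.exp (-wGauge u x) = F at *
    linear_combination F * ψ x 0 * (Complex.I / 2) *
      (-(starRingEnd ℂ (u x)) * (u x * starRingEnd ℂ (u x)) - 2 * Complex.I * d) * hEF -
      F * (u x * starRingEnd ℂ (u x) * l * ψ x 1 + d * ψ x 0) * hII
end

section
/- The one-soliton u_{λ₁,γ} is a smooth function on ℝ × ℝ and is a classical solution of the derivative nonlinear Schrödinger equation: i∂ₜu_{λ₁,γ} + ∂ₓ²u_{λ₁,γ} + i∂ₓ(|u_{λ₁,γ}|²u_{λ₁,γ}) = 0 at every (t,x) ∈ ℝ². -/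
/-!
Write `a = l1`, `b = conj l1`, `ρ = ‖g‖²`, `w = exp (-2iθ)` and `E = exp (4 Im θ)`. Clearing the
exponentials inside the fraction gives (`soliton_eq`)

  `u = K w N / D²`, with `K = 2i (a² - b²) conj g`, `N = b E + a ρ` and `D = a E + b ρ`,

where `D` never vanishes, because its real part is `Re a * (E + ρ) > 0`; smoothness follows.
Moreover `N = conj D` and `|w|² = E`, so that (`cubic_eq`) `|u|² u = -4 (a² - b²)² ρ E K w / D³`.
Along each coordinate line `w` and `E` satisfy linear equations `w' = i m w`, `E' = i k E`, and
differentiation turns `K w M / Dⁿ`, with `M` a polynomial in `E` of degree at most two, into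
`i K w M' / Dⁿ⁺¹` with another polynomial `M'` (`hasDerivAt_frac`); for `∂ₓu` the cubic
term of `M'` vanishes, so that `∂ₓ²u` is obtained in the same way. The DNLS equation thus becomes an
identity between rational functions of `a, b, ρ, E`, which holds identically.
-/

open Complex

/-- The phase `θ(t,x) := λ₁²x + 2λ₁⁴t`. -/
noncomputable def thetaSol (l1 : ℂ) (p : ℝ × ℝ) : ℂ := l1 ^ 2 * p.2 + 2 * l1 ^ 4 * p.1

/-- `s(t,x) := Im θ(t,x)`. -/
noncomputable def sSol (l1 : ℂ) (p : ℝ × ℝ) : ℝ := (thetaSol l1 p).im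

/-- The one-soliton solution `u_{λ₁,γ}` of the DNLS equation. -/
noncomputable def soliton (l1 g : ℂ) (p : ℝ × ℝ) : ℂ :=
  2 * Complex.I * (l1 ^ 2 - (starRingEnd ℂ l1) ^ 2) * (starRingEnd ℂ g / (‖g‖ : ℂ)) *
    Complex.exp (-2 * Complex.I * thetaSol l1 p) * (Real.exp (-2 * sSol l1 p) : ℂ) *
    ((starRingEnd ℂ l1) * (‖g‖ : ℂ)⁻¹ * (Real.exp (2 * sSol l1 p) : ℂ) +
      l1 * (‖g‖ : ℂ) * (Real.exp (-2 * sSol l1 p) : ℂ)) /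
    (l1 * (‖g‖ : ℂ)⁻¹ * (Real.exp (2 * sSol l1 p) : ℂ) +
      (starRingEnd ℂ l1) * (‖g‖ : ℂ) * (Real.exp (-2 * sSol l1 p) : ℂ)) ^ 2

/-- The oscillating factor `w = exp (-2iθ)`. -/
noncomputable def wSol (l1 : ℂ) (p : ℝ × ℝ) : ℂ := Complex.exp (-2 * Complex.I * thetaSol l1 p)

/-- The complex number `exp (4 Im θ)`, written as `exp (-2i (θ - conj θ))` with the difference of
the phases expanded. -/
noncomputable def eSol (l1 : ℂ) (p : ℝ × ℝ) : ℂ :=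
  Complex.exp (-2 * Complex.I * ((l1 ^ 2 - (starRingEnd ℂ l1) ^ 2) * p.2 +
    2 * (l1 ^ 4 - (starRingEnd ℂ l1) ^ 4) * p.1))

/-- The denominator `D = l1 * E + conj l1 * ‖g‖²`. -/
noncomputable def dSol (l1 g : ℂ) (p : ℝ × ℝ) : ℂ :=
  l1 * eSol l1 p + starRingEnd ℂ l1 * (‖g‖ : ℂ) ^ 2

/-- The constant `K = 2i (l1² - (conj l1)²) conj g`. -/
noncomputable def kSol (l1 g : ℂ) : ℂ :=
  2 * Complex.I * (l1 ^ 2 - (starRingEnd ℂ l1) ^ 2) * starRingEnd ℂ g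

lemma eSol_eq (l1 : ℂ) (p : ℝ × ℝ) : eSol l1 p = (Real.exp (2 * sSol l1 p) : ℂ) ^ 2 := by
  have h : (2 * Complex.I * (sSol l1 p : ℂ)) = thetaSol l1 p - starRingEnd ℂ (thetaSol l1 p) := by
    rw [Complex.sub_conj]; simp [sSol]; ring
  have h2 : starRingEnd ℂ (thetaSol l1 p) =
      (starRingEnd ℂ l1) ^ 2 * p.2 + 2 * (starRingEnd ℂ l1) ^ 4 * p.1 := by
    simp only [thetaSol, map_add, map_mul, map_pow, Complex.conj_ofReal, map_ofNat]
  rw [Complex.ofReal_exp, ← Complex.exp_nat_mul, eSol]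
  congr 1
  rw [h2, thetaSol] at h
  push_cast
  linear_combination (2 * Complex.I) * h - 4 * (sSol l1 p : ℂ) * Complex.I_sq

/-- `|w|² = E`. -/
lemma wSol_mul_conj (l1 : ℂ) (p : ℝ × ℝ) : wSol l1 p * starRingEnd ℂ (wSol l1 p) = eSol l1 p := by
  rw [wSol, eSol, ← Complex.exp_conj, ← Complex.exp_add]
  congr 1
  simp only [thetaSol, map_add, map_mul, map_neg, map_pow, Complex.conj_ofReal, Complex.conj_I,
    map_ofNat]
  ring

lemma conj_eSol (l1 : ℂ) (p : ℝ × ℝ) : starRingEnd ℂ (eSol l1 p) = eSol l1 p := by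
  rw [eSol_eq, map_pow, Complex.conj_ofReal]

lemma dSol_ne_zero (l1 g : ℂ) (hre : 0 < l1.re) (p : ℝ × ℝ) : dSol l1 g p ≠ 0 := by
  intro h
  have h1 : (dSol l1 g p).re = l1.re * (Real.exp (2 * sSol l1 p) ^ 2 + ‖g‖ ^ 2) := by
    rw [dSol, eSol_eq, ← Complex.ofReal_pow, ← Complex.ofReal_pow, Complex.add_re,
      Complex.re_mul_ofReal, Complex.re_mul_ofReal, Complex.conj_re]
    ring
  have h2 : 0 < (dSol l1 g p).re := by rw [h1]; positivity
  simp [h] at h2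

lemma conj_dSol (l1 g : ℂ) (p : ℝ × ℝ) :
    starRingEnd ℂ (dSol l1 g p) = starRingEnd ℂ l1 * eSol l1 p + l1 * (‖g‖ : ℂ) ^ 2 := by
  simp [dSol, conj_eSol]

lemma soliton_eq (l1 g : ℂ) (hre : 0 < l1.re) (hg : g ≠ 0) (p : ℝ × ℝ) :
    soliton l1 g p = kSol l1 g * wSol l1 p *
      (starRingEnd ℂ l1 * eSol l1 p + l1 * (‖g‖ : ℂ) ^ 2) / dSol l1 g p ^ 2 := by
  have hD := dSol_ne_zero l1 g hre p
  have hr : (‖g‖ : ℂ) ≠ 0 := by simpa using hg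
  rw [soliton, kSol, ← wSol]
  have hS : ((Real.exp (2 * sSol l1 p) : ℝ) : ℂ) ≠ 0 := by
    exact_mod_cast (Real.exp_pos _).ne'
  have hm : ((Real.exp (-2 * sSol l1 p) : ℝ) : ℂ) = ((Real.exp (2 * sSol l1 p) : ℝ) : ℂ)⁻¹ := by
    rw [neg_mul, Real.exp_neg, Complex.ofReal_inv]
  rw [dSol] at hD ⊢
  rw [hm]
  rw [eSol_eq] at hD ⊢
  generalize ((Real.exp (2 * sSol l1 p) : ℝ) : ℂ) = S at *
  generalize (‖g‖ : ℂ) = r at *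
  generalize starRingEnd ℂ l1 = b at *
  have h1 : l1 * r⁻¹ * S + b * r * S⁻¹ = (l1 * S ^ 2 + b * r ^ 2) / (r * S) := by field_simp
  have h2 : b * r⁻¹ * S + l1 * r * S⁻¹ = (b * S ^ 2 + l1 * r ^ 2) / (r * S) := by field_simp
  rw [h1, h2]
  field_simp

lemma cubic_eq (l1 g : ℂ) (hre : 0 < l1.re) (hg : g ≠ 0) (p : ℝ × ℝ) :
    (‖soliton l1 g p‖ : ℂ) ^ 2 * soliton l1 g p =
      (-4 * (l1 ^ 2 - (starRingEnd ℂ l1) ^ 2) ^ 2 * (‖g‖ : ℂ) ^ 2 * kSol l1 g) * wSol l1 p *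
        eSol l1 p / dSol l1 g p ^ 3 := by
  have hD := dSol_ne_zero l1 g hre p
  have hN : starRingEnd ℂ (dSol l1 g p) ≠ 0 := by simpa using hD
  have hK : kSol l1 g * starRingEnd ℂ (kSol l1 g) =
      -4 * (l1 ^ 2 - (starRingEnd ℂ l1) ^ 2) ^ 2 * (‖g‖ : ℂ) ^ 2 := by
    rw [← Complex.mul_conj' g]
    simp only [kSol, map_mul, map_sub, map_pow, Complex.conj_conj, Complex.conj_I, map_ofNat]
    linear_combination (4 * (l1 ^ 2 - (starRingEnd ℂ l1) ^ 2) ^ 2 * g * starRingEnd ℂ g) *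
      Complex.I_sq
  rw [← Complex.mul_conj', soliton_eq l1 g hre hg, ← conj_dSol, ← hK, ← wSol_mul_conj]
  simp only [map_mul, map_div₀, map_pow, Complex.conj_conj]
  field_simp

/-- If `w' = i m w` and `E' = i k E`, then `K w M / (a E + c)ⁿ` with `M` a quadratic polynomial in `E`
has a derivative of the same shape, with exponent `n + 1`. -/
lemma hasDerivAt_frac {w E : ℝ → ℂ} {x : ℝ} {m k a c : ℂ} (K q₂ q₁ q₀ : ℂ) (n : ℕ)
    (hw : HasDerivAt w (Complex.I * m * w x) x) (hE : HasDerivAt E (Complex.I * k * E x) x)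
    (hD : a * E x + c ≠ 0) :
    HasDerivAt (fun y => K * w y * (q₂ * E y ^ 2 + q₁ * E y + q₀) / (a * E y + c) ^ n)
      (Complex.I * K * w x *
        ((m * (q₂ * E x ^ 2 + q₁ * E x + q₀) + k * (2 * q₂ * E x ^ 2 + q₁ * E x)) * (a * E x + c) -
          n * k * a * E x * (q₂ * E x ^ 2 + q₁ * E x + q₀)) / (a * E x + c) ^ (n + 1)) x := by
  have h := ((hw.const_mul K).fun_mul ((((hE.fun_pow 2).const_mul q₂).fun_add
    (hE.const_mul q₁)).add_const q₀)).fun_div (((hE.const_mul a).add_const c).fun_pow n)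
      (pow_ne_zero n hD)
  refine h.congr_deriv ?_
  clear h
  generalize a * E x + c = D at *
  rcases n with _ | n
  · simp
    field_simp
  · simp only [Nat.add_sub_cancel]
    push_cast
    field_simp
    ring

lemma hasDerivAt_exp_line (A B : ℂ) (x : ℝ) :
    HasDerivAt (fun y : ℝ => Complex.exp (-2 * Complex.I * (A * y + B)))
      (Complex.I * (-2 * A) * Complex.exp (-2 * Complex.I * (A * x + B))) x := by
  have h := ((((Complex.ofRealCLM.hasDerivAt (x := x)).const_mul A).add_const B).const_mul
    (-2 * Complex.I)).cexp
  refine h.congr_deriv ?_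
  simp
  ring

lemma wSol_x (l1 : ℂ) (t x : ℝ) :
    HasDerivAt (fun y => wSol l1 (t, y)) (Complex.I * (-2 * l1 ^ 2) * wSol l1 (t, x)) x := by
  simpa only [wSol, thetaSol] using hasDerivAt_exp_line (l1 ^ 2) (2 * l1 ^ 4 * t) x

lemma wSol_t (l1 : ℂ) (t x : ℝ) :
    HasDerivAt (fun s => wSol l1 (s, x)) (Complex.I * (-2 * (2 * l1 ^ 4)) * wSol l1 (t, x)) t := by
  simpa only [wSol, thetaSol, add_comm (l1 ^ 2 * (x : ℂ))] using
    hasDerivAt_exp_line (2 * l1 ^ 4) (l1 ^ 2 * x) t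

lemma eSol_x (l1 : ℂ) (t x : ℝ) :
    HasDerivAt (fun y => eSol l1 (t, y))
      (Complex.I * (-2 * (l1 ^ 2 - (starRingEnd ℂ l1) ^ 2)) * eSol l1 (t, x)) x := by
  simpa only [eSol] using hasDerivAt_exp_line (l1 ^ 2 - (starRingEnd ℂ l1) ^ 2)
    (2 * (l1 ^ 4 - (starRingEnd ℂ l1) ^ 4) * t) x

lemma eSol_t (l1 : ℂ) (t x : ℝ) :
    HasDerivAt (fun s => eSol l1 (s, x))
      (Complex.I * (-2 * (2 * (l1 ^ 4 - (starRingEnd ℂ l1) ^ 4))) * eSol l1 (t, x)) t := by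
  simpa only [eSol, add_comm ((l1 ^ 2 - (starRingEnd ℂ l1) ^ 2) * (x : ℂ))] using
    hasDerivAt_exp_line (2 * (l1 ^ 4 - (starRingEnd ℂ l1) ^ 4))
      ((l1 ^ 2 - (starRingEnd ℂ l1) ^ 2) * x) t

lemma contDiff_soliton (l1 g : ℂ) (hre : 0 < l1.re) (hg : g ≠ 0) :
    ContDiff ℝ (⊤ : ℕ∞) (soliton l1 g) := by
  have h1 : ContDiff ℝ (⊤ : ℕ∞) (fun p : ℝ × ℝ => (p.1 : ℂ)) :=
    Complex.ofRealCLM.contDiff.comp contDiff_fst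
  have h2 : ContDiff ℝ (⊤ : ℕ∞) (fun p : ℝ × ℝ => (p.2 : ℂ)) :=
    Complex.ofRealCLM.contDiff.comp contDiff_snd
  have hw : ContDiff ℝ (⊤ : ℕ∞) (wSol l1) := by
    unfold wSol thetaSol
    fun_prop
  have hE : ContDiff ℝ (⊤ : ℕ∞) (eSol l1) := by
    unfold eSol
    fun_prop
  have hD : ContDiff ℝ (⊤ : ℕ∞) (dSol l1 g) := by
    unfold dSol
    fun_prop
  rw [funext (soliton_eq l1 g hre hg)]
  have hI : ContDiff ℝ (⊤ : ℕ∞) (fun p => (dSol l1 g p ^ 2)⁻¹) :=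
    (hD.pow 2).inv fun p => pow_ne_zero 2 (dSol_ne_zero l1 g hre p)
  simp only [div_eq_mul_inv]
  exact ContDiff.mul (by fun_prop) hI

theorem soliton_solves_dnls (l1 g : ℂ) (hre : 0 < l1.re) (him : 0 < l1.im) (hg : g ≠ 0) :
    ContDiff ℝ (⊤ : ℕ∞) (soliton l1 g) ∧
      ∀ p : ℝ × ℝ,
        Complex.I * pt (soliton l1 g) p + px (px (soliton l1 g)) p +
          Complex.I * px (fun q => (‖soliton l1 g q‖ : ℂ) ^ 2 * soliton l1 g q) p = 0 := by
  refine ⟨contDiff_soliton l1 g hre hg, ?_⟩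
  rintro ⟨t, x⟩
  have hD : ∀ t x : ℝ, l1 * eSol l1 (t, x) + starRingEnd ℂ l1 * (‖g‖ : ℂ) ^ 2 ≠ 0 :=
    fun t x => dSol_ne_zero l1 g hre (t, x)
  have hu : soliton l1 g = fun p => kSol l1 g * wSol l1 p *
      (0 * eSol l1 p ^ 2 + starRingEnd ℂ l1 * eSol l1 p + l1 * (‖g‖ : ℂ) ^ 2) /
        (l1 * eSol l1 p + starRingEnd ℂ l1 * (‖g‖ : ℂ) ^ 2) ^ 2 := by
    ext p
    rw [soliton_eq l1 g hre hg, dSol, zero_mul, zero_add]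
  have hc : (fun q => (‖soliton l1 g q‖ : ℂ) ^ 2 * soliton l1 g q) = fun p =>
      (-4 * (l1 ^ 2 - (starRingEnd ℂ l1) ^ 2) ^ 2 * (‖g‖ : ℂ) ^ 2 * kSol l1 g) * wSol l1 p *
        (0 * eSol l1 p ^ 2 + 1 * eSol l1 p + 0) /
        (l1 * eSol l1 p + starRingEnd ℂ l1 * (‖g‖ : ℂ) ^ 2) ^ 3 := by
    ext p
    rw [cubic_eq l1 g hre hg, dSol, zero_mul, zero_add, one_mul, add_zero]
  have hux : px (soliton l1 g) = fun p => (Complex.I * kSol l1 g) * wSol l1 p *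
      ((-2 * l1 * (starRingEnd ℂ l1) ^ 3) * eSol l1 p ^ 2 +
        (2 * l1 ^ 4 - 8 * l1 ^ 2 * (starRingEnd ℂ l1) ^ 2 + 2 * (starRingEnd ℂ l1) ^ 4) *
          (‖g‖ : ℂ) ^ 2 * eSol l1 p + (-2 * l1 ^ 3 * starRingEnd ℂ l1 * (‖g‖ : ℂ) ^ 4)) /
        (l1 * eSol l1 p + starRingEnd ℂ l1 * (‖g‖ : ℂ) ^ 2) ^ 3 := by
    ext ⟨t, x⟩
    simp only [px, hu]
    rw [(hasDerivAt_frac (kSol l1 g) 0 (starRingEnd ℂ l1) (l1 * (‖g‖ : ℂ) ^ 2) 2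
      (wSol_x l1 t x) (eSol_x l1 t x) (hD t x)).deriv]
    congr 1
    push_cast
    ring
  rw [hux, hc, hu]
  simp only [pt, px]
  rw [(hasDerivAt_frac _ _ _ _ 2 (wSol_t l1 t x) (eSol_t l1 t x) (hD t x)).deriv,
    (hasDerivAt_frac _ _ _ _ 3 (wSol_x l1 t x) (eSol_x l1 t x) (hD t x)).deriv,
    (hasDerivAt_frac _ _ _ _ 3 (wSol_x l1 t x) (eSol_x l1 t x) (hD t x)).deriv]
  have h := hD t x
  generalize eSol l1 (t, x) = E at *
  generalize wSol l1 (t, x) = w at *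
  generalize starRingEnd ℂ l1 = b at *
  generalize (‖g‖ : ℂ) = r at *
  generalize kSol l1 g = K at *
  push_cast
  -- After the factor `i² K w` is taken out, an identity between rational functions remains.
  field_simp
  ring
end

section
/- For every t ∈ ℝ, the squared L² norm in x of the one-soliton equals eight times the argument of λ₁: ∫_ℝ |u_{λ₁,γ}(t,x)|² dx = 8·arg(λ₁). -/
/-!
Write `l1 = a + b i`. The numerator of the soliton is the complex conjugate of the quantity squared
in its denominator, and `|e^{-2iθ}| = e^{2s}` cancels the factor `e^{-2s}`. Hence
`‖u‖² = 64a²b² y / (a²(y+1)² + b²(y-1)²)` with `y = e^{4s}/‖g‖²` (`norm_soliton_sq`). Since `s` is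
affine in `x` with slope `Im (l1²) = 2ab`, we have `y = e^{8abx + d}`, and the density is the
derivative of `4 arctan ((b/a) (y-1)/(y+1))` (`hasDerivAt_profile`). This primitive tends to
`±4 arctan (b/a) = ±4 arg l1` as `x → ±∞`, so the integral is `8 arg l1`.
-/


open Complex

open MeasureTheory Filter Topology

/-- The fundamental theorem of calculus on `ℝ` for a nonnegative derivative; integrability is
automatic because the primitive has finite limits. -/
lemma integral_of_hasDerivAt_of_nonneg {F F' : ℝ → ℝ} {m n : ℝ}
    (hd : ∀ x, HasDerivAt F (F' x) x) (h0 : ∀ x, 0 ≤ F' x)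
    (hbot : Tendsto F atBot (𝓝 m)) (htop : Tendsto F atTop (𝓝 n)) :
    ∫ x, F' x = n - m := by
  have h1 : IntegrableOn F' (Set.Ioi 0) :=
    integrableOn_Ioi_deriv_of_nonneg' (fun x _ => hd x) (fun x _ => h0 x) htop
  -- The left half-line is handled by reflecting `F` to `x ↦ -F (-x)`.
  have h2 : IntegrableOn (fun x => F' (-x)) (Set.Ioi 0) := by
    refine integrableOn_Ioi_deriv_of_nonneg' (g := fun x => -F (-x)) (l := -m) (fun x _ => ?_)
      (fun x _ => h0 _) (hbot.comp tendsto_neg_atTop_atBot).neg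
    have := ((hd (-x)).comp x (hasDerivAt_neg x)).neg
    exact this.congr_deriv (by ring)
  have h3 : IntegrableOn F' (Set.Iic 0) := by
    rw [integrableOn_Iic_iff_integrableOn_Iio]
    simpa using h2.comp_neg
  refine integral_of_hasDerivAt_of_tendsto hd ?_ hbot htop
  rw [← integrableOn_univ, ← Set.Iic_union_Ioi (a := (0 : ℝ))]
  exact h3.union h1

lemma hasDerivAt_profile {a b : ℝ} (ha : 0 < a) (d x : ℝ) :
    HasDerivAt
      (fun x => 4 * Real.arctan (b / a * (1 - 2 / (Real.exp (8 * a * b * x + d) + 1))))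
      (64 * a ^ 2 * b ^ 2 * Real.exp (8 * a * b * x + d) /
        (a ^ 2 * (Real.exp (8 * a * b * x + d) + 1) ^ 2 +
          b ^ 2 * (Real.exp (8 * a * b * x + d) - 1) ^ 2)) x := by
  have hz : HasDerivAt (fun x : ℝ => 8 * a * b * x + d) (8 * a * b) x := by
    simpa using ((hasDerivAt_id x).const_mul (8 * a * b)).add_const d
  have hy := hz.exp
  have hpos : 0 < Real.exp (8 * a * b * x + d) := Real.exp_pos _
  have h1 := (((hasDerivAt_const x (2 : ℝ)).div (hy.add_const 1) (by positivity)).const_sub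
    1).const_mul (b / a)
  have h2 := h1.arctan.const_mul 4
  refine h2.congr_deriv ?_
  simp only [Pi.div_apply]
  generalize Real.exp (8 * a * b * x + d) = y at hpos ⊢
  have hD : 0 < a ^ 2 * (y + 1) ^ 2 + b ^ 2 * (y - 1) ^ 2 := by positivity
  have hD' : 1 + (b / a * (1 - 2 / (y + 1))) ^ 2 =
      (a ^ 2 * (y + 1) ^ 2 + b ^ 2 * (y - 1) ^ 2) / (a ^ 2 * (y + 1) ^ 2) := by
    field_simp
    ring
  rw [hD']
  field_simp
  ring

/-- On the right, `4s - 2 log ‖g‖` plays the role of the logarithm of `y = e^{4s}/‖g‖²`. -/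
lemma norm_soliton_sq (l1 g : ℂ) (hre : 0 < l1.re) (hg : g ≠ 0) (p : ℝ × ℝ) :
    ‖soliton l1 g p‖ ^ 2 =
      64 * l1.re ^ 2 * l1.im ^ 2 * Real.exp (4 * sSol l1 p - 2 * Real.log ‖g‖) /
        (l1.re ^ 2 * (Real.exp (4 * sSol l1 p - 2 * Real.log ‖g‖) + 1) ^ 2 +
          l1.im ^ 2 * (Real.exp (4 * sSol l1 p - 2 * Real.log ‖g‖) - 1) ^ 2) := by
  have hG : 0 < ‖g‖ := norm_pos_iff.mpr hg
  have hE : 0 < Real.exp (2 * sSol l1 p) := Real.exp_pos _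
  have hexp : ‖Complex.exp (-2 * Complex.I * thetaSol l1 p)‖ = Real.exp (2 * sSol l1 p) := by
    rw [Complex.norm_exp]
    simp [sSol]
  have hy : Real.exp (4 * sSol l1 p - 2 * Real.log ‖g‖) =
      (Real.exp (2 * sSol l1 p) / ‖g‖) ^ 2 := by
    conv_rhs => rw [← Real.exp_log hG, ← Real.exp_sub, ← Real.exp_nat_mul]
    congr 1
    push_cast
    ring
  have hphase : ‖starRingEnd ℂ g / (‖g‖ : ℂ)‖ = 1 := by
    rw [norm_div, RCLike.norm_conj, Complex.norm_real, norm_norm, div_self hG.ne']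
  have hpre : ‖2 * Complex.I * (l1 ^ 2 - (starRingEnd ℂ l1) ^ 2)‖ ^ 2 =
      64 * l1.re ^ 2 * l1.im ^ 2 := by
    rw [← Complex.normSq_eq_norm_sq, Complex.normSq_apply]
    simp [pow_two]
    ring
  unfold soliton
  rw [hy, show -2 * sSol l1 p = -(2 * sSol l1 p) by ring, Real.exp_neg]
  simp only [norm_mul _ (Complex.exp _), norm_mul _ (starRingEnd ℂ g / _), norm_div _ (_ ^ 2),
    norm_mul _ (((Real.exp _)⁻¹ : ℝ) : ℂ), norm_mul _ (_ + _), hexp, hphase, norm_pow]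
  generalize Real.exp (2 * sSol l1 p) = E at hE ⊢
  generalize ‖g‖ = G at hG ⊢
  have hnum : ‖starRingEnd ℂ l1 * (G : ℂ)⁻¹ * (E : ℂ) + l1 * (G : ℂ) * ((E⁻¹ : ℝ) : ℂ)‖ =
      ‖l1 * (G : ℂ)⁻¹ * (E : ℂ) + starRingEnd ℂ l1 * (G : ℂ) * ((E⁻¹ : ℝ) : ℂ)‖ := by
    rw [← RCLike.norm_conj]
    simp
  have hden : ‖l1 * (G : ℂ)⁻¹ * (E : ℂ) + starRingEnd ℂ l1 * (G : ℂ) * ((E⁻¹ : ℝ) : ℂ)‖ ^ 2 =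
      (l1.re ^ 2 * ((E / G) ^ 2 + 1) ^ 2 + l1.im ^ 2 * ((E / G) ^ 2 - 1) ^ 2) / (E / G) ^ 2 := by
    rw [← Complex.normSq_eq_norm_sq, Complex.normSq_apply, ← Complex.ofReal_inv]
    simp only [Complex.add_re, Complex.add_im, Complex.re_mul_ofReal, Complex.im_mul_ofReal,
      Complex.conj_re, Complex.conj_im]
    field_simp
    ring
  rw [hnum, Complex.norm_real, Real.norm_of_nonneg (by positivity : 0 ≤ E⁻¹)]
  generalize hN :
    ‖l1 * (G : ℂ)⁻¹ * (E : ℂ) + starRingEnd ℂ l1 * (G : ℂ) * ((E⁻¹ : ℝ) : ℂ)‖ = N at hden ⊢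
  generalize ‖2 * Complex.I * (l1 ^ 2 - (starRingEnd ℂ l1) ^ 2)‖ = P at hpre ⊢
  have hD : 0 < l1.re ^ 2 * ((E / G) ^ 2 + 1) ^ 2 + l1.im ^ 2 * ((E / G) ^ 2 - 1) ^ 2 := by
    positivity
  have hN2 : N ^ 2 ≠ 0 := by
    rw [hden]
    positivity
  have hN0 : N ≠ 0 := by
    rintro rfl
    simp at hN2
  have hcalc : (P * 1 * E * E⁻¹ * N / N ^ 2) ^ 2 = P ^ 2 / N ^ 2 := by
    field_simp
  rw [hcalc, hpre, hden, div_div_eq_mul_div]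

/-- The phase is affine in `x`, with slope `Im (l1²) = 2 Re l1 Im l1`. -/
lemma sSol_eq (l1 : ℂ) (t x : ℝ) :
    sSol l1 (t, x) = 2 * l1.re * l1.im * x + sSol l1 (t, 0) := by
  simp [sSol, thetaSol, pow_two]
  ring_nf
  simp

lemma arctan_im_div_re {l1 : ℂ} (hre : 0 < l1.re) :
    Real.arctan (l1.im / l1.re) = Complex.arg l1 := by
  have h := abs_lt.mp (Complex.abs_arg_lt_pi_div_two_iff.mpr (Or.inl hre))
  rw [← Complex.tan_arg, Real.arctan_tan h.1 h.2]

theorem soliton_L2_norm (l1 g : ℂ) (hre : 0 < l1.re) (him : 0 < l1.im) (hg : g ≠ 0) :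
    ∀ t : ℝ, ∫ x : ℝ, ‖soliton l1 g (t, x)‖ ^ 2 = 8 * Complex.arg l1 := by
  intro t
  set d : ℝ := 4 * sSol l1 (t, 0) - 2 * Real.log ‖g‖ with hd
  have hz (x : ℝ) : 4 * sSol l1 (t, x) - 2 * Real.log ‖g‖ = 8 * l1.re * l1.im * x + d := by
    rw [sSol_eq, hd]
    ring
  simp only [norm_soliton_sq l1 g hre hg, hz]
  have hk : 0 < 8 * l1.re * l1.im := by positivity
  have hF {L : Filter ℝ} {c : ℝ}
      (h : Tendsto (fun x => 2 / (Real.exp (8 * l1.re * l1.im * x + d) + 1)) L (𝓝 c)) :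
      Tendsto (fun x => 4 * Real.arctan (l1.im / l1.re *
        (1 - 2 / (Real.exp (8 * l1.re * l1.im * x + d) + 1)))) L
        (𝓝 (4 * Real.arctan (l1.im / l1.re * (1 - c)))) :=
    ((Real.continuous_arctan.tendsto _).comp ((h.const_sub 1).const_mul _)).const_mul 4
  have htop : Tendsto (fun x => 2 / (Real.exp (8 * l1.re * l1.im * x + d) + 1)) atTop (𝓝 0) :=
    (tendsto_atTop_add_const_right _ _ (Real.tendsto_exp_atTop.comp
      (tendsto_atTop_add_const_right _ _ (tendsto_id.const_mul_atTop hk)))).const_div_atTop 2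
  have hbot : Tendsto (fun x => 2 / (Real.exp (8 * l1.re * l1.im * x + d) + 1)) atBot
      (𝓝 (2 / (0 + 1))) :=
    tendsto_const_nhds.div ((Real.tendsto_exp_atBot.comp (tendsto_atBot_add_const_right _ _
      (tendsto_id.const_mul_atBot hk))).add_const 1) (by norm_num)
  rw [integral_of_hasDerivAt_of_nonneg (fun x => hasDerivAt_profile hre d x)
    (fun x => by positivity) (hF hbot) (hF htop)]
  rw [show l1.im / l1.re * (1 - 2 / (0 + 1)) = -(l1.im / l1.re) by ring, Real.arctan_neg,
    sub_zero, mul_one, arctan_im_div_re hre]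
  ring
end

section
/- Let γ = 1 and define η = (η₁,η₂) : ℝ × ℝ → ℂ² by η₁(t,x) := conj(λ₁)·e^{−i(conj(λ₁)²x + 2conj(λ₁)⁴t)} / (λ₁e^{2s(t,x)} + conj(λ₁)e^{−2s(t,x)}) and η₂(t,x) := conj(λ₁)·e^{i(conj(λ₁)²x + 2conj(λ₁)⁴t)} / (conj(λ₁)e^{2s(t,x)} + λ₁e^{−2s(t,x)}). Then for every (t,x) ∈ ℝ², η(t,x) ≠ 0, d_{λ₁}(η(t,x),η(t,x)) ≠ 0, and the Bäcklund transformation annihilates the one-soliton: B_{λ₁}(η(t,x))·u_{λ₁,1}(t,x) = 0. -/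
/-!
Write `l̄` for the conjugate of `l = λ₁`, `D = l e^{2s} + l̄ e^{-2s}` for the soliton denominator, which
has positive real part because `Re l > 0`. Since `|e^{∓i θ̄}|² = e^{∓2s}`, the components of
`η` satisfy `|η₁|² = |l|² e^{-2s} / |D|²` and `|η₂|² = |l|² e^{2s} / |D|²`, so
`d_l(η,η) = |l|² / D` and `d_{l̄}(η,η) = |l|² / D̄`; in particular `G_l(η) = D / D̄`.
As `η₁ η̄₂ = |l|² e^{-2i Re θ} / D²` and `e^{-2iθ} e^{-2s} = e^{-2i Re θ}`, both `G_l(η) u` and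
`S_l(η)` equal `2i (l² - l̄²) e^{-2i Re θ} / D`, and they cancel.
-/

open Complex

/-- The first component of `η` in the Bäcklund transformation removing the one-soliton. -/
noncomputable def etaSol1 (l1 : ℂ) (p : ℝ × ℝ) : ℂ :=
  starRingEnd ℂ l1 *
      Complex.exp (-Complex.I *
        ((starRingEnd ℂ l1) ^ 2 * p.2 + 2 * (starRingEnd ℂ l1) ^ 4 * p.1)) /
    (l1 * (Real.exp (2 * sSol l1 p) : ℂ) +
      starRingEnd ℂ l1 * (Real.exp (-2 * sSol l1 p) : ℂ))

/-- The second component of `η` in the Bäcklund transformation removing the one-soliton. -/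
noncomputable def etaSol2 (l1 : ℂ) (p : ℝ × ℝ) : ℂ :=
  starRingEnd ℂ l1 *
      Complex.exp (Complex.I *
        ((starRingEnd ℂ l1) ^ 2 * p.2 + 2 * (starRingEnd ℂ l1) ^ 4 * p.1)) /
    (starRingEnd ℂ l1 * (Real.exp (2 * sSol l1 p) : ℂ) +
      l1 * (Real.exp (-2 * sSol l1 p) : ℂ))

/-- The denominator `D = λ₁ e^{2s} + conj(λ₁) e^{-2s}` of the one-soliton with `γ = 1`. -/
noncomputable def solDen (l1 : ℂ) (p : ℝ × ℝ) : ℂ :=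
  l1 * (Real.exp (2 * sSol l1 p) : ℂ) + starRingEnd ℂ l1 * (Real.exp (-2 * sSol l1 p) : ℂ)

lemma conj_solDen (l1 : ℂ) (p : ℝ × ℝ) :
    starRingEnd ℂ (solDen l1 p) = starRingEnd ℂ l1 * (Real.exp (2 * sSol l1 p) : ℂ) +
      l1 * (Real.exp (-2 * sSol l1 p) : ℂ) := by
  simp only [solDen, map_add, map_mul, Complex.conj_conj, Complex.conj_ofReal]

lemma solDen_ne_zero {l1 : ℂ} (hre : 0 < l1.re) (p : ℝ × ℝ) : solDen l1 p ≠ 0 := by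
  intro h
  have h1 : l1.re * Real.exp (2 * sSol l1 p) + l1.re * Real.exp (-2 * sSol l1 p) = 0 := by
    have h2 := congrArg Complex.re h
    simpa only [solDen, Complex.add_re, Complex.re_mul_ofReal, Complex.conj_re,
      Complex.zero_re] using h2
  have : 0 < l1.re * Real.exp (2 * sSol l1 p) + l1.re * Real.exp (-2 * sSol l1 p) := by
    positivity
  exact this.ne' h1

lemma conj_thetaSol (l1 : ℂ) (p : ℝ × ℝ) :
    (starRingEnd ℂ l1) ^ 2 * p.2 + 2 * (starRingEnd ℂ l1) ^ 4 * p.1 =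
      starRingEnd ℂ (thetaSol l1 p) := by
  simp only [thetaSol, map_add, map_mul, map_pow, Complex.conj_ofReal, map_ofNat]

lemma etaSol1_eq (l1 : ℂ) (p : ℝ × ℝ) :
    etaSol1 l1 p = starRingEnd ℂ l1 *
      Complex.exp (-Complex.I * starRingEnd ℂ (thetaSol l1 p)) / solDen l1 p := by
  rw [etaSol1, conj_thetaSol, solDen]

lemma etaSol2_eq (l1 : ℂ) (p : ℝ × ℝ) :
    etaSol2 l1 p = starRingEnd ℂ l1 *
      Complex.exp (Complex.I * starRingEnd ℂ (thetaSol l1 p)) /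
        starRingEnd ℂ (solDen l1 p) := by
  rw [etaSol2, conj_thetaSol, conj_solDen]

lemma norm_sq_etaSol1 (l1 : ℂ) (p : ℝ × ℝ) :
    (‖etaSol1 l1 p‖ : ℂ) ^ 2 = l1 * starRingEnd ℂ l1 * (Real.exp (-2 * sSol l1 p) : ℂ) /
      (solDen l1 p * starRingEnd ℂ (solDen l1 p)) := by
  rw [etaSol1_eq, norm_div, norm_mul,
    Complex.norm_exp, Complex.norm_conj, Complex.mul_conj', Complex.mul_conj']
  have h : (-Complex.I * starRingEnd ℂ (thetaSol l1 p)).re = -sSol l1 p := by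
    simp [sSol]
  have e : Real.exp (-2 * sSol l1 p) = Real.exp (-sSol l1 p) ^ 2 := by
    rw [← Real.exp_nat_mul]; congr 1; push_cast; ring
  rw [h, e]
  push_cast
  rw [div_pow, mul_pow]

lemma norm_sq_etaSol2 (l1 : ℂ) (p : ℝ × ℝ) :
    (‖etaSol2 l1 p‖ : ℂ) ^ 2 = l1 * starRingEnd ℂ l1 * (Real.exp (2 * sSol l1 p) : ℂ) /
      (solDen l1 p * starRingEnd ℂ (solDen l1 p)) := by
  rw [etaSol2_eq, norm_div, norm_mul,
    Complex.norm_exp, Complex.norm_conj, Complex.norm_conj, Complex.mul_conj', Complex.mul_conj']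
  have h : (Complex.I * starRingEnd ℂ (thetaSol l1 p)).re = sSol l1 p := by
    simp [sSol]
  have e : Real.exp (2 * sSol l1 p) = Real.exp (sSol l1 p) ^ 2 := by
    rw [← Real.exp_nat_mul]; congr 1
  rw [h, e]
  push_cast
  rw [div_pow, mul_pow]

lemma dForm_etaSol {l1 : ℂ} (hre : 0 < l1.re) (p : ℝ × ℝ) :
    dForm l1 (etaSol1 l1 p, etaSol2 l1 p) = l1 * starRingEnd ℂ l1 / solDen l1 p := by
  have hD := solDen_ne_zero hre p
  have hD' : starRingEnd ℂ (solDen l1 p) ≠ 0 := (map_ne_zero _).2 hD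
  rw [dForm, norm_sq_etaSol1, norm_sq_etaSol2]
  field_simp
  rw [conj_solDen, ← neg_mul]
  ring

lemma dForm_conj_etaSol {l1 : ℂ} (hre : 0 < l1.re) (p : ℝ × ℝ) :
    dForm (starRingEnd ℂ l1) (etaSol1 l1 p, etaSol2 l1 p) =
      l1 * starRingEnd ℂ l1 / starRingEnd ℂ (solDen l1 p) := by
  have h := congrArg (starRingEnd ℂ) (dForm_etaSol hre p)
  simp only [dForm, map_add, map_mul, map_div₀, map_pow, Complex.conj_ofReal,
    Complex.conj_conj] at h ⊢
  rw [h, mul_comm l1]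

lemma etaSol1_mul_conj_etaSol2 (l1 : ℂ) (p : ℝ × ℝ) :
    etaSol1 l1 p * starRingEnd ℂ (etaSol2 l1 p) =
      l1 * starRingEnd ℂ l1 * (Complex.exp (-2 * Complex.I * thetaSol l1 p) *
        (Real.exp (-2 * sSol l1 p) : ℂ)) / solDen l1 p ^ 2 := by
  -- both exponents equal `-2i Re θ`
  have e : Complex.exp (-2 * Complex.I * thetaSol l1 p) * (Real.exp (-2 * sSol l1 p) : ℂ) =
      Complex.exp (-Complex.I * starRingEnd ℂ (thetaSol l1 p)) *
        Complex.exp (-Complex.I * thetaSol l1 p) := by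
    rw [Complex.ofReal_exp, ← Complex.exp_add, ← Complex.exp_add]
    congr 1
    apply Complex.ext
    · simp [sSol]
    · simp [sSol]
      ring
  rw [e, etaSol1_eq, etaSol2_eq]
  simp only [map_mul, map_div₀, Complex.conj_conj, ← Complex.exp_conj, Complex.conj_I]
  ring

lemma soliton_one (l1 : ℂ) (p : ℝ × ℝ) :
    soliton l1 1 p = 2 * Complex.I * (l1 ^ 2 - (starRingEnd ℂ l1) ^ 2) *
      (Complex.exp (-2 * Complex.I * thetaSol l1 p) * (Real.exp (-2 * sSol l1 p) : ℂ)) *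
      starRingEnd ℂ (solDen l1 p) / solDen l1 p ^ 2 := by
  rw [conj_solDen, soliton, solDen]
  simp only [map_one, norm_one, Complex.ofReal_one, inv_one, div_one, mul_one]
  ring

theorem backlund_annihilates_soliton (l1 : ℂ) (hre : 0 < l1.re) (him : 0 < l1.im) :
    ∀ p : ℝ × ℝ,
      (etaSol1 l1 p, etaSol2 l1 p) ≠ 0 ∧
      dForm l1 (etaSol1 l1 p, etaSol2 l1 p) ≠ 0 ∧
      Bop l1 (etaSol1 l1 p, etaSol2 l1 p) (soliton l1 1 p) = 0 := by
  intro p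
  have hl : l1 ≠ 0 := by
    rintro rfl
    simp at hre
  have hl' : starRingEnd ℂ l1 ≠ 0 := (map_ne_zero _).2 hl
  have hD := solDen_ne_zero hre p
  have hD' : starRingEnd ℂ (solDen l1 p) ≠ 0 := (map_ne_zero _).2 hD
  have hd : dForm l1 (etaSol1 l1 p, etaSol2 l1 p) ≠ 0 := by
    rw [dForm_etaSol hre]
    exact div_ne_zero (mul_ne_zero hl hl') hD
  refine ⟨fun h => hd ?_, hd, ?_⟩
  · rw [h]; simp [dForm]
  · have hG : Gop l1 (etaSol1 l1 p, etaSol2 l1 p) =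
        solDen l1 p / starRingEnd ℂ (solDen l1 p) := by
      rw [Gop, dForm_etaSol hre, dForm_conj_etaSol hre]
      field_simp
    have hS : Sop l1 (etaSol1 l1 p, etaSol2 l1 p) =
        2 * Complex.I * (l1 ^ 2 - (starRingEnd ℂ l1) ^ 2) *
          (Complex.exp (-2 * Complex.I * thetaSol l1 p) *
            (Real.exp (-2 * sSol l1 p) : ℂ)) / solDen l1 p := by
      rw [Sop, dForm_etaSol hre, mul_assoc _ (etaSol1 l1 p, etaSol2 l1 p).1,
        etaSol1_mul_conj_etaSol2]
      field_simp
    rw [Bop, hG, hS, soliton_one]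
    generalize Complex.exp (-2 * Complex.I * thetaSol l1 p) *
      (Real.exp (-2 * sSol l1 p) : ℂ) = E
    field_simp
    ring
end

section
/- Define η⁽¹⁾ : ℝ × ℝ → ℂ² by η⁽¹⁾(t,x) := (γ⁻¹·conj(λ₁)⁻¹·e^{−iθ(t,x)}, conj(λ₁)⁻¹·e^{iθ(t,x)}). Then for every (t,x) ∈ ℝ², d_{λ₁}(η⁽¹⁾(t,x),η⁽¹⁾(t,x)) ≠ 0 and the Bäcklund transformation applied to the zero potential recovers the one-soliton: B_{λ₁}(η⁽¹⁾(t,x))·0 = G_{λ₁}(η⁽¹⁾(t,x))·S_{λ₁}(η⁽¹⁾(t,x)) = u_{λ₁,γ}(t,x). -/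
/-!
Write `D = λ₁|γ|⁻¹e^{2s} + conj(λ₁)|γ|e^{−2s}` for the denominator in the soliton. Since
`|e^{−iθ}|² = e^{2s}` and `|e^{iθ}|² = e^{−2s}`, one finds `d_{λ₁}(η⁽¹⁾,η⁽¹⁾) = D / (|λ₁|²|γ|)`
and `d_{conj λ₁}(η⁽¹⁾,η⁽¹⁾) = E / (|λ₁|²|γ|)`, where `E` is `D` with `λ₁` and `conj(λ₁)`
exchanged. Hence `G = E/D`. Moreover `−i(θ + conj θ) = −2iθ − 2s` gives
`η₁ conj(η₂) = γ⁻¹|λ₁|⁻² e^{−2iθ} e^{−2s}`, and `|γ|γ⁻¹ = conj(γ)/|γ|`, so that `G · S` is the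
soliton. Nonvanishing of `d_{λ₁}` holds because its real part is `Re(λ₁)(|η₁|² + |η₂|²)`.
-/

open Complex

/-- The function `η⁽¹⁾(t,x) := (γ⁻¹conj(λ₁)⁻¹e^{−iθ}, conj(λ₁)⁻¹e^{iθ})`. -/
noncomputable def etaOne (l1 g : ℂ) (p : ℝ × ℝ) : ℂ × ℂ :=
  (g⁻¹ * (starRingEnd ℂ l1)⁻¹ * Complex.exp (-Complex.I * thetaSol l1 p),
   (starRingEnd ℂ l1)⁻¹ * Complex.exp (Complex.I * thetaSol l1 p))

/-- The real part of `d_l(η,η)` is `Re(l)(|η₁|² + |η₂|²)`, which is positive when `η₁ ≠ 0`. -/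
lemma dForm_ne_zero {l : ℂ} (hl : 0 < l.re) {η : ℂ × ℂ} (hη : η.1 ≠ 0) :
    dForm l η ≠ 0 := by
  intro h
  have hre : (dForm l η).re = l.re * (‖η.1‖ ^ 2 + ‖η.2‖ ^ 2) := by
    simp only [dForm, ← Complex.ofReal_pow, Complex.add_re, Complex.re_mul_ofReal,
      Complex.conj_re]
    ring
  have hpos : 0 < l.re * (‖η.1‖ ^ 2 + ‖η.2‖ ^ 2) := by
    have := norm_pos_iff.mpr hη
    positivity
  rw [← hre, h] at hpos
  simp at hpos

lemma norm_exp_neg_I_mul_sq (z : ℂ) :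
    ‖Complex.exp (-Complex.I * z)‖ ^ 2 = Real.exp (2 * z.im) := by
  rw [Complex.norm_exp, ← Real.exp_nat_mul]
  simp

lemma norm_exp_I_mul_sq (z : ℂ) :
    ‖Complex.exp (Complex.I * z)‖ ^ 2 = Real.exp (-2 * z.im) := by
  rw [Complex.norm_exp, ← Real.exp_nat_mul]
  simp

/-- The exponential factors of `η₁ conj(η₂)` combine by `−i(z + conj z) = −2iz − 2 Im z`. -/
lemma exp_mul_conj_exp (z : ℂ) :
    Complex.exp (-Complex.I * z) * (starRingEnd ℂ) (Complex.exp (Complex.I * z)) =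
      Complex.exp (-2 * Complex.I * z) * (Real.exp (-2 * z.im) : ℂ) := by
  rw [← Complex.exp_conj, Complex.ofReal_exp, ← Complex.exp_add, ← Complex.exp_add]
  congr 1
  apply Complex.ext
  · simp
  · simp
    ring

/-- Stated for arbitrary `l`, so that it applies to both `l = λ₁` and `l = conj(λ₁)` in `G_{λ₁}`. -/
lemma dForm_etaOne (l l1 g : ℂ) (hg : g ≠ 0) (p : ℝ × ℝ) :
    dForm l (etaOne l1 g p) = ((‖l1‖ : ℂ) ^ 2 * (‖g‖ : ℂ))⁻¹ *
      (l * (‖g‖ : ℂ)⁻¹ * (Real.exp (2 * sSol l1 p) : ℂ) +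
        (starRingEnd ℂ l) * (‖g‖ : ℂ) * (Real.exp (-2 * sSol l1 p) : ℂ)) := by
  have hg' : (‖g‖ : ℂ) ≠ 0 := by simpa using hg
  simp only [dForm, etaOne, sSol, ← norm_exp_neg_I_mul_sq, ← norm_exp_I_mul_sq, norm_mul,
    norm_inv, RCLike.norm_conj, Complex.ofReal_mul, Complex.ofReal_inv, Complex.ofReal_pow]
  field_simp

theorem backlund_creates_soliton (l1 g : ℂ) (hre : 0 < l1.re) (him : 0 < l1.im)
    (hg : g ≠ 0) :
    ∀ p : ℝ × ℝ,
      dForm l1 (etaOne l1 g p) ≠ 0 ∧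
      Bop l1 (etaOne l1 g p) 0 = Gop l1 (etaOne l1 g p) * Sop l1 (etaOne l1 g p) ∧
      Gop l1 (etaOne l1 g p) * Sop l1 (etaOne l1 g p) = soliton l1 g p := by
  intro p
  have hl1 : l1 ≠ 0 := by
    rintro rfl
    simp at hre
  have hd : dForm l1 (etaOne l1 g p) ≠ 0 :=
    dForm_ne_zero hre (by simp [etaOne, hg, hl1])
  refine ⟨hd, by simp [Bop], ?_⟩
  have hnum : (etaOne l1 g p).1 * (starRingEnd ℂ) (etaOne l1 g p).2 =
      g⁻¹ * ((‖l1‖ : ℂ) ^ 2)⁻¹ *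
        (Complex.exp (-2 * Complex.I * thetaSol l1 p) * (Real.exp (-2 * sSol l1 p) : ℂ)) := by
    rw [sSol, ← exp_mul_conj_exp, ← Complex.mul_conj']
    simp only [etaOne, map_mul, map_inv₀, Complex.conj_conj, mul_inv]
    ring
  have hgn : (‖g‖ : ℂ) ≠ 0 := by simpa using hg
  have hln : (‖l1‖ : ℂ) ≠ 0 := by simpa using hl1
  have hphase : (starRingEnd ℂ) g / (‖g‖ : ℂ) = (‖g‖ : ℂ) * g⁻¹ := by
    rw [div_eq_iff hgn, mul_right_comm, ← sq, ← Complex.mul_conj']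
    field_simp
  rw [Gop, Sop, mul_assoc _ (etaOne l1 g p).1, hnum, soliton, hphase]
  rw [dForm_etaOne _ _ _ hg] at hd
  rw [dForm_etaOne _ _ _ hg, dForm_etaOne _ _ _ hg, Complex.conj_conj]
  have hD := right_ne_zero_of_mul hd
  clear hd hnum hphase
  -- Treating `D` as an atom keeps `field_simp` from clearing the inverses inside it.
  generalize l1 * (‖g‖ : ℂ)⁻¹ * (Real.exp (2 * sSol l1 p) : ℂ) +
    (starRingEnd ℂ l1) * (‖g‖ : ℂ) * (Real.exp (-2 * sSol l1 p) : ℂ) = D at hD ⊢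
  generalize (starRingEnd ℂ l1) * (‖g‖ : ℂ)⁻¹ * (Real.exp (2 * sSol l1 p) : ℂ) +
    l1 * (‖g‖ : ℂ) * (Real.exp (-2 * sSol l1 p) : ℂ) = E
  field_simp
end
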